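/- Let ρ∞ > 0, a∞ > 0, b∞ := a∞ρ∞, and B∞ ∈ ℝ³, and let A⁰, A(ω), L be the coefficient matrices of the linearized Euler–Maxwell system. Then there exist constants C > 0 and c > 0 (depending only on ρ∞, a∞, B∞) such that for every r ≥ 0, every ω ∈ S² ⊂ ℝ³, and every differentiable function û = (ρ̂, v̂, Ê, B̂) : [0,∞) → ℂ × ℂ³ × ℂ³ × ℂ³ = ℂ¹⁰ satisfying A⁰û′(t) + i r A(ω) û(t) + L û(t) = 0 for all t ≥ 0 together with the initial constraints i r (ω·Ê(0)) + ρ̂(0) = 0 and i r (ω·B̂(0)) = 0, one has |û(t)| ≤ C e^{−c η(r) t} |û(0)| for all t ≥ 0, where η(r) := r²/(1 + r²)². -/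

import Mathlib

open Matrix BigOperators Finset

noncomputable section

/-- Complexification of a real matrix. -/
def cmap {a b : ℕ} (X : Matrix (Fin a) (Fin b) ℝ) : Matrix (Fin a) (Fin b) ℂ :=
  X.map (fun x => (x : ℂ))

/-- Real part of the standard Hermitian inner product `⟨x, y⟩ = ∑ xᵢ conj yᵢ` on `ℂᵐ`. -/
def reIP {m : ℕ} (x y : Fin m → ℂ) : ℝ := (∑ i, x i * (starRingEnd ℂ) (y i)).re

/-- Symmetric part `X₁ = (X + Xᵀ)/2` of a real square matrix. -/
def symP {m : ℕ} (X : Matrix (Fin m) (Fin m) ℝ) : Matrix (Fin m) (Fin m) ℝ :=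
  (2⁻¹ : ℝ) • (X + Xᵀ)

/-- Skew-symmetric part `X₂ = (X − Xᵀ)/2` of a real square matrix. -/
def skewP {m : ℕ} (X : Matrix (Fin m) (Fin m) ℝ) : Matrix (Fin m) (Fin m) ℝ :=
  (2⁻¹ : ℝ) • (X - Xᵀ)

/-- Kernel of (the complexification of) a real matrix, as a subset of `ℂᵐ`. -/
def kerC {m : ℕ} (L : Matrix (Fin m) (Fin m) ℝ) : Set (Fin m → ℂ) :=
  {z | (cmap L).mulVec z = 0}

/-- Euclidean norm on `ℂᵐ`. -/
def cnrm {m : ℕ} (z : Fin m → ℂ) : ℝ := Real.sqrt (∑ i, Complex.normSq (z i))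

/-- Cross product `x × z` of a real vector with a complex vector in ℂ³. -/
def crossC (x : Fin 3 → ℝ) (z : Fin 3 → ℂ) : Fin 3 → ℂ :=
  ![(x 1 : ℂ) * z 2 - (x 2 : ℂ) * z 1,
    (x 2 : ℂ) * z 0 - (x 0 : ℂ) * z 2,
    (x 0 : ℂ) * z 1 - (x 1 : ℂ) * z 0]

/-- Dot product of a real vector with a complex vector. -/
def dotC {k : ℕ} (x : Fin k → ℝ) (z : Fin k → ℂ) : ℂ := ∑ j, (x j : ℂ) * z j

/-- Euclidean norm of `û = (ρ̂, v̂, Ê, B̂) ∈ ℂ¹⁰`. -/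
def nrmEM (ρ : ℂ) (v E B : Fin 3 → ℂ) : ℝ :=
  Real.sqrt (Complex.normSq ρ + ∑ j, Complex.normSq (v j)
    + ∑ j, Complex.normSq (E j) + ∑ j, Complex.normSq (B j))

/-! The energy identity only shows damping of the velocity `v`. The dissipation reaches the other
components through the coupling: the derivative of `⟨v, E⟩` contains `-|E|²`, and the pressure term
contributes `-a |ρ|²` because `ρ = -div E`; the derivative of `-⟨curl B, E⟩` contains `-|curl B|²`,
which equals `-|ξ|² |B|²` because `div B = 0`. Adding these correctors to the energy with the
weights `ε² / (1 + |ξ|²)` and `ε³ / (1 + |ξ|²)²`, where `ε` is small independently of `ξ`, gives a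
functional comparable to the energy whose rate of dissipation is at least a multiple of
`|ξ|² / (1 + |ξ|²)²` times the energy, so that Grönwall's inequality yields the decay.
-/

namespace EulerMaxwell

open scoped RealInnerProductSpace

local notation "V3" => EuclideanSpace ℂ (Fin 3)

section FourierSymbols

variable (x : Fin 3 → ℝ)

/-- The map `z ↦ x × z` on `ℂ³`, as a continuous linear map. -/
def crossCLM : V3 →L[ℂ] V3 :=
  LinearMap.toContinuousLinearMap
    { toFun z := WithLp.toLp 2 (crossC x z)
      map_add' z w := by ext i; fin_cases i <;> simp [crossC] <;> ring
      map_smul' c z := by ext i; fin_cases i <;> simp [crossC] <;> ring }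

/-- The Fourier symbol `z ↦ i (ξ · z)` of the divergence at frequency `ξ`. -/
def divSymbol : V3 →L[ℂ] ℂ :=
  LinearMap.toContinuousLinearMap
    { toFun z := Complex.I * dotC x z
      map_add' z w := by simp [dotC, mul_add, Finset.sum_add_distrib]
      map_smul' c z := by simp [dotC, Finset.mul_sum, mul_left_comm] }

/-- The Fourier symbol `c ↦ i c ξ` of the gradient at frequency `ξ`. -/
def gradSymbol (c : ℂ) : V3 :=
  WithLp.toLp 2 fun j => Complex.I * c * x j

/-- The Fourier symbol `z ↦ i (ξ × z)` of the curl at frequency `ξ`. -/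
def curlSymbol : V3 →L[ℂ] V3 :=
  Complex.I • crossCLM x

lemma crossCLM_apply (z : V3) : crossCLM x z = WithLp.toLp 2 (crossC x z) := rfl

lemma divSymbol_apply (z : V3) : divSymbol x z = Complex.I * dotC x z := rfl

lemma curlSymbol_apply (z : V3) :
    curlSymbol x z = Complex.I • WithLp.toLp 2 (crossC x z) := rfl

lemma inner_crossCLM_self (z : V3) : ⟪crossCLM x z, z⟫ = 0 := by
  simp only [crossCLM_apply, crossC, PiLp.inner_apply, Complex.inner, Fin.sum_univ_three,
    cons_val_zero, cons_val_one, Matrix.cons_val, Complex.mul_re, Complex.mul_im, Complex.sub_re,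
    Complex.sub_im, Complex.conj_re, Complex.conj_im, Complex.ofReal_re, Complex.ofReal_im]
  ring

lemma inner_gradSymbol_left (c : ℂ) (z : V3) :
    ⟪gradSymbol x c, z⟫ = -⟪c, divSymbol x z⟫ := by
  simp only [gradSymbol, divSymbol_apply, dotC, PiLp.inner_apply, Fin.sum_univ_three, Complex.inner,
    map_mul, Complex.conj_I, Complex.conj_ofReal, Complex.neg_re, Complex.neg_im, Complex.mul_re,
    Complex.mul_im, Complex.add_re, Complex.add_im, Complex.I_re, Complex.I_im, Complex.conj_re,
    Complex.conj_im, Complex.ofReal_re, Complex.ofReal_im]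
  ring

lemma inner_curlSymbol_left (y z : V3) :
    ⟪curlSymbol x y, z⟫ = ⟪y, curlSymbol x z⟫ := by
  simp only [curlSymbol_apply, crossC, PiLp.inner_apply, PiLp.smul_apply, smul_eq_mul,
    Complex.inner, map_mul, Complex.conj_I, Fin.sum_univ_three, cons_val_zero, cons_val_one,
    Matrix.cons_val, Complex.neg_re, Complex.neg_im, Complex.mul_re, Complex.mul_im, Complex.sub_re,
    Complex.sub_im, Complex.I_re, Complex.I_im, Complex.conj_re, Complex.conj_im, Complex.ofReal_re,
    Complex.ofReal_im]
  ring

lemma divSymbol_curlSymbol (z : V3) : divSymbol x (curlSymbol x z) = 0 := by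
  simp only [divSymbol_apply, curlSymbol_apply, PiLp.smul_apply, smul_eq_mul, dotC, crossC,
    Fin.sum_univ_three, cons_val_zero, cons_val_one, Matrix.cons_val]
  ring

lemma norm_curlSymbol_sq_add_norm_divSymbol_sq (z : V3) :
    ‖curlSymbol x z‖ ^ 2 + ‖divSymbol x z‖ ^ 2 = (∑ j, x j ^ 2) * ‖z‖ ^ 2 := by
  simp only [curlSymbol_apply, norm_smul, Complex.norm_I, one_mul, divSymbol_apply, norm_mul,
    EuclideanSpace.norm_sq_eq, ← Complex.normSq_eq_norm_sq, Fin.sum_univ_three]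
  simp only [dotC, crossC, Fin.sum_univ_three, cons_val_zero, cons_val_one, Matrix.cons_val,
    Complex.normSq_apply, Complex.add_re, Complex.add_im, Complex.sub_re, Complex.sub_im,
    Complex.mul_re, Complex.mul_im, Complex.ofReal_re, Complex.ofReal_im]
  ring

end FourierSymbols

section Calculus

open Set

lemma eq_of_hasDerivWithinAt_zero {F : Type*} [NormedAddCommGroup F] [NormedSpace ℝ F]
    {f : ℝ → F} {a : ℝ} (hf : ∀ t, a ≤ t → HasDerivWithinAt f 0 (Ici a) t)
    {t : ℝ} (ht : a ≤ t) : f t = f a :=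
  constant_of_has_deriv_right_zero
    (fun s hs => (hf s hs.1).continuousWithinAt.mono Icc_subset_Ici_self)
    (fun s hs => (hf s hs.1).mono (Ici_subset_Ici.2 hs.1)) t ⟨ht, le_rfl⟩

lemma le_mul_exp_of_hasDerivWithinAt_le {f f' : ℝ → ℝ} {K a : ℝ}
    (hf : ∀ t, a ≤ t → HasDerivWithinAt f (f' t) (Ici a) t)
    (hle : ∀ t, a ≤ t → f' t ≤ K * f t) {t : ℝ} (ht : a ≤ t) :
    f t ≤ f a * Real.exp (K * (t - a)) := by
  rw [← gronwallBound_ε0]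
  refine le_gronwallBound_of_liminf_deriv_right_le
    (fun s hs => (hf s hs.1).continuousWithinAt.mono Icc_subset_Ici_self)
    (fun s hs _ hr => ?_) le_rfl (fun s hs => by simpa using hle s hs.1) t ⟨ht, le_rfl⟩
  simpa [slope_def_field, div_eq_inv_mul] using
    ((hf s hs.1).mono (Ici_subset_Ici.2 hs.1)).liminf_right_slope_le hr

lemma hasDerivWithinAt_toLp {n : ℕ} {f : ℝ → Fin n → ℂ} {f' : Fin n → ℂ} {s : Set ℝ} {t : ℝ}
    (hf : HasDerivWithinAt f f' s t) :
    HasDerivWithinAt (fun t => (WithLp.toLp 2 (f t) : EuclideanSpace ℂ (Fin n)))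
      (WithLp.toLp 2 f') s t :=
  (PiLp.hasFDerivAt_toLp (𝕜 := ℝ) 2 (f t)).comp_hasDerivWithinAt t hf

lemma hasDerivWithinAt_clm {F G : Type*} [NormedAddCommGroup F] [NormedSpace ℂ F]
    [NormedAddCommGroup G] [NormedSpace ℂ G] (L : F →L[ℂ] G)
    {f : ℝ → F} {f' : F} {s : Set ℝ} {t : ℝ} (hf : HasDerivWithinAt f f' s t) :
    HasDerivWithinAt (fun t => L (f t)) (L f') s t :=
  (L.restrictScalars ℝ).hasFDerivAt.comp_hasDerivWithinAt t hf

end Calculus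

section Lyapunov

/-- The unknown `(ρ, v, E, B)` at a fixed frequency and time. -/
structure State where
  ρ : ℂ
  v : V3
  E : V3
  B : V3

/-- The multiplier `1 / (1 + |ξ|²)`, the symbol of `(1 - Δ)⁻¹`: it makes the products of order up
to two entering the Lyapunov functional bounded uniformly in the frequency. -/
def besselWeight (ξ : Fin 3 → ℝ) : ℝ := (1 + ∑ j, ξ j ^ 2)⁻¹

/-- The exponential rate `η(ξ) = |ξ|² / (1 + |ξ|²)²` of the decay estimate. -/
def decayRate (ξ : Fin 3 → ℝ) : ℝ := (∑ j, ξ j ^ 2) / (1 + ∑ j, ξ j ^ 2) ^ 2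

variable (a q ε : ℝ) (b ξ : Fin 3 → ℝ) (u : State)

/-- The energy `a |ρ|² + q |v|² + |E|² + |B|²`, whose quadratic form is the symmetrizer `A⁰`; its
only loss is the damping of `v`. -/
def energy : ℝ := a * ‖u.ρ‖ ^ 2 + q * ‖u.v‖ ^ 2 + ‖u.E‖ ^ 2 + ‖u.B‖ ^ 2

/-- The energy together with the correctors `⟨v, E⟩`, which dissipates `ρ` and `E`, and
`-⟨curl B, E⟩`, which dissipates `B`. The powers of `ε` make each corrector small compared with
what the previous ones dissipate. -/
def lyapunov : ℝ :=
  energy a q u + ε ^ 2 * besselWeight ξ * ⟪u.v, u.E⟫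
    - ε ^ 3 * besselWeight ξ ^ 2 * ⟪curlSymbol ξ u.B, u.E⟫

/-- The time derivative of `⟨v, E⟩` along a solution, with `ρ = -div E` used in the pressure
term. -/
def electricRate : ℝ :=
  q * ‖u.v‖ ^ 2 - a * ‖u.ρ‖ ^ 2 - ‖u.E‖ ^ 2 - ⟪u.v, u.E⟫ + ⟪crossCLM b u.v, u.E⟫
    + ⟪u.v, curlSymbol ξ u.B⟫

/-- The time derivative of `⟨curl B, E⟩` along a solution. -/
def magneticRate : ℝ :=
  ‖curlSymbol ξ u.B‖ ^ 2 - ‖curlSymbol ξ u.E‖ ^ 2 + q * ⟪curlSymbol ξ u.B, u.v⟫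

lemma besselWeight_pos : 0 < besselWeight ξ := by
  unfold besselWeight; positivity

lemma besselWeight_add_mul_sum_sq : besselWeight ξ + besselWeight ξ * ∑ j, ξ j ^ 2 = 1 := by
  have h : 1 + ∑ j, ξ j ^ 2 ≠ 0 := by positivity
  rw [← mul_one_add, besselWeight, inv_mul_cancel₀ h]

lemma besselWeight_le_one : besselWeight ξ ≤ 1 := by
  have : 0 ≤ besselWeight ξ * ∑ j, ξ j ^ 2 := mul_nonneg (besselWeight_pos ξ).le (by positivity)
  linarith [besselWeight_add_mul_sum_sq ξ]

lemma besselWeight_mul_sum_sq_le_one : besselWeight ξ * ∑ j, ξ j ^ 2 ≤ 1 := by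
  linarith [besselWeight_add_mul_sum_sq ξ, besselWeight_pos ξ]

lemma decayRate_eq : decayRate ξ = besselWeight ξ ^ 2 * ∑ j, ξ j ^ 2 := by
  rw [decayRate, besselWeight, inv_pow, div_eq_inv_mul]

lemma decayRate_nonneg : 0 ≤ decayRate ξ := by
  unfold decayRate; positivity

lemma decayRate_le_besselWeight : decayRate ξ ≤ besselWeight ξ := by
  rw [decayRate_eq, sq, mul_assoc]
  exact mul_le_of_le_one_right (besselWeight_pos ξ).le (besselWeight_mul_sum_sq_le_one ξ)

lemma decayRate_le_one : decayRate ξ ≤ 1 :=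
  (decayRate_le_besselWeight ξ).trans (besselWeight_le_one ξ)

lemma norm_curlSymbol_sq_le (z : V3) :
    ‖curlSymbol ξ z‖ ^ 2 ≤ (∑ j, ξ j ^ 2) * ‖z‖ ^ 2 := by
  linarith [norm_curlSymbol_sq_add_norm_divSymbol_sq ξ z, sq_nonneg ‖divSymbol ξ z‖]

lemma norm_curlSymbol_sq_of_divSymbol_eq_zero {z : V3} (hz : divSymbol ξ z = 0) :
    ‖curlSymbol ξ z‖ ^ 2 = (∑ j, ξ j ^ 2) * ‖z‖ ^ 2 := by
  simpa [hz] using norm_curlSymbol_sq_add_norm_divSymbol_sq ξ z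

lemma besselWeight_mul_norm_curlSymbol_le (z : V3) :
    besselWeight ξ * ‖curlSymbol ξ z‖ ≤ ‖z‖ := by
  refine le_of_sq_le_sq ?_ (norm_nonneg z)
  calc (besselWeight ξ * ‖curlSymbol ξ z‖) ^ 2
      = besselWeight ξ ^ 2 * ‖curlSymbol ξ z‖ ^ 2 := mul_pow _ _ _
    _ ≤ besselWeight ξ ^ 2 * ((∑ j, ξ j ^ 2) * ‖z‖ ^ 2) := by
        gcongr; exact norm_curlSymbol_sq_le ξ z
    _ = decayRate ξ * ‖z‖ ^ 2 := by rw [decayRate_eq]; ring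
    _ ≤ ‖z‖ ^ 2 := mul_le_of_le_one_left (sq_nonneg _) (decayRate_le_one ξ)

variable {a q ε}

lemma energy_le_mul_energy {a' q' C : ℝ} (ha : a ≤ C * a') (hq : q ≤ C * q') (hC : 1 ≤ C) :
    energy a q u ≤ C * energy a' q' u := by
  unfold energy
  linarith [mul_le_mul_of_nonneg_right ha (sq_nonneg ‖u.ρ‖),
    mul_le_mul_of_nonneg_right hq (sq_nonneg ‖u.v‖),
    mul_le_mul_of_nonneg_right hC (sq_nonneg ‖u.E‖),
    mul_le_mul_of_nonneg_right hC (sq_nonneg ‖u.B‖)]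

lemma abs_lyapunov_sub_energy_le (ha : 0 ≤ a) (hε : 0 ≤ ε) (hε4 : ε ≤ 1 / 4) (hεq : ε ≤ q) :
    |lyapunov a q ε ξ u - energy a q u| ≤ energy a q u / 2 := by
  have hα := besselWeight_pos ξ
  have hvE : |ε ^ 2 * besselWeight ξ * ⟪u.v, u.E⟫| ≤ ε ^ 2 * (‖u.v‖ * ‖u.E‖) := by
    rw [abs_mul, abs_of_nonneg (by positivity)]
    exact mul_le_mul (mul_le_of_le_one_right (sq_nonneg ε) (besselWeight_le_one ξ))
      (abs_real_inner_le_norm _ _) (abs_nonneg _) (sq_nonneg ε)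
  have hBE : |ε ^ 3 * besselWeight ξ ^ 2 * ⟪curlSymbol ξ u.B, u.E⟫| ≤ ε ^ 3 * (‖u.B‖ * ‖u.E‖) := by
    rw [abs_mul, abs_of_nonneg (by positivity)]
    calc ε ^ 3 * besselWeight ξ ^ 2 * |⟪curlSymbol ξ u.B, u.E⟫|
        ≤ ε ^ 3 * besselWeight ξ ^ 2 * (‖curlSymbol ξ u.B‖ * ‖u.E‖) := by
          gcongr; exact abs_real_inner_le_norm _ _
      _ = ε ^ 3 * (besselWeight ξ * (besselWeight ξ * ‖curlSymbol ξ u.B‖) * ‖u.E‖) := by ring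
      _ ≤ ε ^ 3 * (1 * ‖u.B‖ * ‖u.E‖) := by
          gcongr
          exacts [besselWeight_le_one ξ, besselWeight_mul_norm_curlSymbol_le ξ u.B]
      _ = ε ^ 3 * (‖u.B‖ * ‖u.E‖) := by ring
  have hε2 : ε ^ 2 ≤ 1 / 4 * q := by
    rw [sq]; exact mul_le_mul hε4 hεq hε (by norm_num)
  have hε2' : ε ^ 2 ≤ 1 / 4 := by nlinarith
  have hε3 : ε ^ 3 ≤ 1 / 4 := by nlinarith
  have hv := mul_le_mul_of_nonneg_right hε2 (sq_nonneg ‖u.v‖)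
  have hE := mul_le_mul_of_nonneg_right hε2' (sq_nonneg ‖u.E‖)
  have hB := mul_le_mul_of_nonneg_right hε3 (add_nonneg (sq_nonneg ‖u.B‖) (sq_nonneg ‖u.E‖))
  have hyoung_vE := mul_le_mul_of_nonneg_left (two_mul_le_add_sq ‖u.v‖ ‖u.E‖) (sq_nonneg ε)
  have hyoung_BE := mul_le_mul_of_nonneg_left (two_mul_le_add_sq ‖u.B‖ ‖u.E‖) (pow_nonneg hε 3)
  have hρ_nonneg : 0 ≤ a * ‖u.ρ‖ ^ 2 := by positivity
  have hv_nonneg : 0 ≤ q * ‖u.v‖ ^ 2 := mul_nonneg (hε.trans hεq) (sq_nonneg _)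
  calc |lyapunov a q ε ξ u - energy a q u|
      = |ε ^ 2 * besselWeight ξ * ⟪u.v, u.E⟫
          - ε ^ 3 * besselWeight ξ ^ 2 * ⟪curlSymbol ξ u.B, u.E⟫| := by rw [lyapunov]; ring_nf
    _ ≤ ε ^ 2 * (‖u.v‖ * ‖u.E‖) + ε ^ 3 * (‖u.B‖ * ‖u.E‖) :=
        (abs_sub _ _).trans (add_le_add hvE hBE)
    _ ≤ energy a q u / 2 := by
        unfold energy
        linarith [sq_nonneg ‖u.B‖, sq_nonneg ‖u.E‖]

lemma electric_dissipation_le (hq : 0 ≤ q) (hε : 0 ≤ ε) (hε1 : ε ≤ 1) :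
    ε ^ 2 * besselWeight ξ * electricRate a q b ξ u
      ≤ -(ε ^ 2 * besselWeight ξ * (a * ‖u.ρ‖ ^ 2 + 3 / 4 * ‖u.E‖ ^ 2))
        + ε ^ 3 * (besselWeight ξ * ‖curlSymbol ξ u.B‖) ^ 2 / 4
        + ε * (q + (1 + ‖crossCLM b‖) ^ 2 + 1) * ‖u.v‖ ^ 2 := by
  set α := besselWeight ξ
  set M := 1 + ‖crossCLM b‖
  set k := ‖curlSymbol ξ u.B‖
  have hα : 0 ≤ α := (besselWeight_pos ξ).le
  have hεα : ε ^ 2 * α ≤ ε := by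
    have : ε * α ≤ 1 := mul_le_one₀ hε1 hα (besselWeight_le_one ξ)
    nlinarith
  have hdamping : -⟪u.v, u.E⟫ + ⟪crossCLM b u.v, u.E⟫ ≤ M * ‖u.v‖ * ‖u.E‖ := by
    have hv := neg_le_of_abs_le (abs_real_inner_le_norm u.v u.E)
    have hJ := (real_inner_le_norm (crossCLM b u.v) u.E).trans
      (mul_le_mul_of_nonneg_right ((crossCLM b).le_opNorm u.v) (norm_nonneg _))
    linear_combination hv + hJ
  have hyoung : M * ‖u.v‖ * ‖u.E‖ ≤ ‖u.E‖ ^ 2 / 4 + M ^ 2 * ‖u.v‖ ^ 2 := by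
    linarith [sq_nonneg (‖u.E‖ / 2 - M * ‖u.v‖)]
  have hcurl : ε ^ 2 * α * ⟪u.v, curlSymbol ξ u.B⟫
      ≤ ε ^ 3 * (α * k) ^ 2 / 4 + ε * ‖u.v‖ ^ 2 := by
    have hcs := mul_le_mul_of_nonneg_left (real_inner_le_norm u.v (curlSymbol ξ u.B))
      (by positivity : 0 ≤ ε ^ 2 * α)
    linear_combination hcs + mul_nonneg hε (sq_nonneg (‖u.v‖ - ε * (α * k) / 2))
  have hv : ε ^ 2 * α * ((q + M ^ 2) * ‖u.v‖ ^ 2) ≤ ε * ((q + M ^ 2) * ‖u.v‖ ^ 2) := by gcongr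
  rw [electricRate]
  linear_combination hcurl + hv + ε ^ 2 * α * (hdamping + hyoung)

lemma magnetic_dissipation_le (hq : 0 ≤ q) (hε : 0 ≤ ε) (hε4 : ε ≤ 1 / 4) :
    -(ε ^ 3 * besselWeight ξ ^ 2 * magneticRate q ξ u)
      ≤ -(3 / 4 * ε ^ 3 * (besselWeight ξ * ‖curlSymbol ξ u.B‖) ^ 2)
        + ε ^ 2 * besselWeight ξ * ‖u.E‖ ^ 2 / 4 + ε * q ^ 2 * ‖u.v‖ ^ 2 := by
  set α := besselWeight ξ
  set k := ‖curlSymbol ξ u.B‖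
  have hα : 0 ≤ α := (besselWeight_pos ξ).le
  have hα1 : α ≤ 1 := besselWeight_le_one ξ
  have hcurlE : ε ^ 3 * α ^ 2 * ‖curlSymbol ξ u.E‖ ^ 2 ≤ ε ^ 2 * α * ‖u.E‖ ^ 2 / 4 :=
    calc ε ^ 3 * α ^ 2 * ‖curlSymbol ξ u.E‖ ^ 2
        ≤ ε ^ 3 * α ^ 2 * ((∑ j, ξ j ^ 2) * ‖u.E‖ ^ 2) := by
          gcongr; exact norm_curlSymbol_sq_le ξ u.E
      _ = ε * ε ^ 2 * decayRate ξ * ‖u.E‖ ^ 2 := by rw [decayRate_eq]; ring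
      _ ≤ 1 / 4 * ε ^ 2 * α * ‖u.E‖ ^ 2 := by
          gcongr
          exacts [decayRate_nonneg ξ, decayRate_le_besselWeight ξ]
      _ = ε ^ 2 * α * ‖u.E‖ ^ 2 / 4 := by ring
  have hcs : -(ε ^ 3 * α ^ 2 * (q * ⟪curlSymbol ξ u.B, u.v⟫))
      ≤ ε ^ 3 * α ^ 2 * (q * (k * ‖u.v‖)) := by
    rw [← mul_neg, ← mul_neg]
    gcongr
    exact neg_le.1 (neg_le_of_abs_le (abs_real_inner_le_norm _ _))
  have hyoung : ε ^ 3 * α ^ 2 * (q * (k * ‖u.v‖))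
      ≤ ε ^ 3 * (α * k) ^ 2 / 4 + ε ^ 3 * α ^ 2 * (q ^ 2 * ‖u.v‖ ^ 2) := by
    linear_combination mul_nonneg (pow_nonneg hε 3) (sq_nonneg (α * k / 2 - α * q * ‖u.v‖))
  have hv : ε ^ 3 * α ^ 2 * (q ^ 2 * ‖u.v‖ ^ 2) ≤ ε * 1 * (q ^ 2 * ‖u.v‖ ^ 2) := by
    gcongr
    · exact pow_le_of_le_one hε (by linarith) three_ne_zero
    · exact pow_le_one₀ hα hα1
  rw [magneticRate]
  linear_combination hcurlE + hcs + hyoung + hv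

/-- The smallness of the Lyapunov parameter `ε` under which the damping of `v` absorbs the
errors of the correctors. -/
structure IsAdmissible (q : ℝ) (b : Fin 3 → ℝ) (ε : ℝ) : Prop where
  pos : 0 < ε
  le_quarter : ε ≤ 1 / 4
  mul_le : ε * (q + (1 + ‖crossCLM b‖) ^ 2 + 1 + q ^ 2) ≤ q

variable {b} in
lemma IsAdmissible.le_coeff (h : IsAdmissible q b ε) : ε ≤ q :=
  (le_mul_of_one_le_right h.pos.le
    (by nlinarith [sq_nonneg (q + 1), norm_nonneg (crossCLM b)])).trans h.mul_le

variable {b} in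
lemma IsAdmissible.pos_coeff (h : IsAdmissible q b ε) : 0 < q :=
  h.pos.trans_le h.le_coeff

lemma exists_isAdmissible (hq : 0 < q) : ∃ ε, IsAdmissible q b ε := by
  have hK : 0 < q + (1 + ‖crossCLM b‖) ^ 2 + 1 + q ^ 2 := by positivity
  exact ⟨min (1 / 4) (q / _), by positivity, min_le_left _ _, (le_div_iff₀ hK).1 (min_le_right _ _)⟩

lemma lyapunov_dissipation_le (ha : 0 ≤ a) (hadm : IsAdmissible q b ε) (hB : divSymbol ξ u.B = 0) :
    -(2 * q * ‖u.v‖ ^ 2)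
        + ε ^ 2 * besselWeight ξ * electricRate a q b ξ u
        - ε ^ 3 * besselWeight ξ ^ 2 * magneticRate q ξ u
      ≤ -(ε ^ 3 / 2 * decayRate ξ * energy a q u) := by
  have hq := hadm.pos_coeff.le
  have hε := hadm.pos.le
  have hε4 := hadm.le_quarter
  have helectric := electric_dissipation_le (a := a) b ξ u hq hε (by linarith)
  have hmagnetic := magnetic_dissipation_le ξ u hq hε hε4
  have hcurl : (besselWeight ξ * ‖curlSymbol ξ u.B‖) ^ 2 = decayRate ξ * ‖u.B‖ ^ 2 := by
    rw [mul_pow, norm_curlSymbol_sq_of_divSymbol_eq_zero ξ hB, decayRate_eq]; ring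
  rw [hcurl] at helectric hmagnetic
  have hv := mul_le_mul_of_nonneg_right hadm.mul_le (sq_nonneg ‖u.v‖)
  have hη := decayRate_nonneg ξ
  have hε3 : ε ^ 3 ≤ ε ^ 2 := pow_le_pow_of_le_one hε (by linarith) (by norm_num)
  have hρE : ε ^ 3 * decayRate ξ * (a * ‖u.ρ‖ ^ 2 + ‖u.E‖ ^ 2)
      ≤ ε ^ 2 * besselWeight ξ * (a * ‖u.ρ‖ ^ 2 + ‖u.E‖ ^ 2) := by
    gcongr
    exact decayRate_le_besselWeight ξ
  have hv' : ε ^ 3 * decayRate ξ * (q * ‖u.v‖ ^ 2) ≤ 1 * (q * ‖u.v‖ ^ 2) := by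
    gcongr
    exact mul_le_one₀ (pow_le_one₀ hε (by linarith)) hη (decayRate_le_one ξ)
  have hρ_nonneg : 0 ≤ ε ^ 2 * besselWeight ξ * (a * ‖u.ρ‖ ^ 2) := by
    have := (besselWeight_pos ξ).le
    positivity
  have hv_nonneg : 0 ≤ q * ‖u.v‖ ^ 2 := by positivity
  unfold energy
  linarith

end Lyapunov

section Solutions

open Set

/-- `u` solves, for `t ≥ 0`, the linearized Euler–Maxwell system at frequency `ξ`, with each
equation solved for the time derivative (`q = ρ∞`, `a = a∞`, `b = B∞`) and with the constraints
`div E = -ρ`, `div B = 0` at time zero. -/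
structure IsSolution (a q : ℝ) (b ξ : Fin 3 → ℝ) (u : ℝ → State) : Prop where
  hasDerivWithinAt_ρ : ∀ t, 0 ≤ t →
    HasDerivWithinAt (fun t => (u t).ρ) (-(q • divSymbol ξ (u t).v)) (Ici 0) t
  hasDerivWithinAt_v : ∀ t, 0 ≤ t →
    HasDerivWithinAt (fun t => (u t).v)
      (-(a • gradSymbol ξ (u t).ρ) - (u t).v + crossCLM b (u t).v - (u t).E) (Ici 0) t
  hasDerivWithinAt_E : ∀ t, 0 ≤ t →
    HasDerivWithinAt (fun t => (u t).E) (curlSymbol ξ (u t).B + q • (u t).v) (Ici 0) t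
  hasDerivWithinAt_B : ∀ t, 0 ≤ t →
    HasDerivWithinAt (fun t => (u t).B) (-curlSymbol ξ (u t).E) (Ici 0) t
  divSymbol_E_zero : divSymbol ξ (u 0).E = -(u 0).ρ
  divSymbol_B_zero : divSymbol ξ (u 0).B = 0

namespace IsSolution

variable {a q ε : ℝ} {b ξ : Fin 3 → ℝ} {u : ℝ → State} {t : ℝ}

lemma divSymbol_E (h : IsSolution a q b ξ u) (ht : 0 ≤ t) :
    divSymbol ξ (u t).E = -(u t).ρ := by
  have hconst := eq_of_hasDerivWithinAt_zero (f := fun t => divSymbol ξ (u t).E + (u t).ρ)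
    (fun s hs => ((hasDerivWithinAt_clm _ (h.hasDerivWithinAt_E s hs)).add
      (h.hasDerivWithinAt_ρ s hs)).congr_deriv (by simp [divSymbol_curlSymbol])) ht
  exact eq_neg_of_add_eq_zero_left (by simpa [h.divSymbol_E_zero] using hconst)

lemma divSymbol_B (h : IsSolution a q b ξ u) (ht : 0 ≤ t) : divSymbol ξ (u t).B = 0 :=
  (eq_of_hasDerivWithinAt_zero (f := fun t => divSymbol ξ (u t).B)
    (fun s hs => (hasDerivWithinAt_clm _ (h.hasDerivWithinAt_B s hs)).congr_deriv
      (by simp [divSymbol_curlSymbol])) ht).trans h.divSymbol_B_zero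

lemma hasDerivWithinAt_energy (h : IsSolution a q b ξ u) (ht : 0 ≤ t) :
    HasDerivWithinAt (fun t => energy a q (u t)) (-(2 * q * ‖(u t).v‖ ^ 2)) (Ici 0) t := by
  refine (((((h.hasDerivWithinAt_ρ t ht).norm_sq.const_mul a).add
    ((h.hasDerivWithinAt_v t ht).norm_sq.const_mul q)).add
    (h.hasDerivWithinAt_E t ht).norm_sq).add (h.hasDerivWithinAt_B t ht).norm_sq).congr_deriv ?_
  have hpressure : ⟪(u t).v, gradSymbol ξ (u t).ρ⟫ = -⟪(u t).ρ, divSymbol ξ (u t).v⟫ := by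
    rw [real_inner_comm, inner_gradSymbol_left]
  have hlorentz : ⟪(u t).v, crossCLM b (u t).v⟫ = 0 := by
    rw [real_inner_comm, inner_crossCLM_self]
  have hcurl : ⟪(u t).B, curlSymbol ξ (u t).E⟫ = ⟪(u t).E, curlSymbol ξ (u t).B⟫ := by
    rw [← inner_curlSymbol_left, real_inner_comm]
  simp only [inner_add_right, inner_sub_right, inner_neg_right, real_inner_smul_right,
    real_inner_self_eq_norm_sq, hpressure, hlorentz, hcurl, real_inner_comm (u t).v (u t).E]
  ring

lemma hasDerivWithinAt_inner_v_E (h : IsSolution a q b ξ u) (ht : 0 ≤ t) :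
    HasDerivWithinAt (fun t => ⟪(u t).v, (u t).E⟫) (electricRate a q b ξ (u t)) (Ici 0) t := by
  refine ((h.hasDerivWithinAt_v t ht).inner ℝ (h.hasDerivWithinAt_E t ht)).congr_deriv ?_
  have hpressure : ⟪gradSymbol ξ (u t).ρ, (u t).E⟫ = ‖(u t).ρ‖ ^ 2 := by
    rw [inner_gradSymbol_left, h.divSymbol_E ht, inner_neg_right, neg_neg,
      real_inner_self_eq_norm_sq]
  simp only [inner_add_left, inner_sub_left, inner_neg_left, inner_add_right,
    real_inner_smul_left, real_inner_smul_right, real_inner_self_eq_norm_sq, hpressure,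
    electricRate]
  ring

lemma hasDerivWithinAt_inner_curlSymbol_B_E (h : IsSolution a q b ξ u) (ht : 0 ≤ t) :
    HasDerivWithinAt (fun t => ⟪curlSymbol ξ (u t).B, (u t).E⟫) (magneticRate q ξ (u t))
      (Ici 0) t := by
  refine ((hasDerivWithinAt_clm (curlSymbol ξ) (h.hasDerivWithinAt_B t ht)).inner ℝ
    (h.hasDerivWithinAt_E t ht)).congr_deriv ?_
  have hcurl : ⟪curlSymbol ξ (curlSymbol ξ (u t).E), (u t).E⟫ = ‖curlSymbol ξ (u t).E‖ ^ 2 := by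
    rw [inner_curlSymbol_left, real_inner_self_eq_norm_sq]
  simp only [map_neg, inner_neg_left, inner_add_right, real_inner_smul_right,
    real_inner_self_eq_norm_sq, hcurl, magneticRate]
  ring

lemma lyapunov_le (h : IsSolution a q b ξ u) (ha : 0 ≤ a) (hadm : IsAdmissible q b ε)
    (ht : 0 ≤ t) :
    lyapunov a q ε ξ (u t)
      ≤ lyapunov a q ε ξ (u 0) * Real.exp (-(ε ^ 3 / 3 * decayRate ξ) * t) := by
  have hderiv : ∀ s, 0 ≤ s → HasDerivWithinAt (fun t => lyapunov a q ε ξ (u t)) _ (Ici 0) s :=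
    fun s hs => ((h.hasDerivWithinAt_energy hs).add
      ((h.hasDerivWithinAt_inner_v_E hs).const_mul (ε ^ 2 * besselWeight ξ))).sub
      ((h.hasDerivWithinAt_inner_curlSymbol_B_E hs).const_mul (ε ^ 3 * besselWeight ξ ^ 2))
  have hle := le_mul_exp_of_hasDerivWithinAt_le (K := -(ε ^ 3 / 3 * decayRate ξ)) hderiv
    (fun s hs => ?_) ht
  · simpa using hle
  calc _ ≤ -(ε ^ 3 / 2 * decayRate ξ * energy a q (u s)) :=
        lyapunov_dissipation_le b ξ (u s) ha hadm (h.divSymbol_B hs)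
    _ ≤ -(ε ^ 3 / 3 * decayRate ξ) * lyapunov a q ε ξ (u s) := by
        have hupper := (abs_le.1 (abs_lyapunov_sub_energy_le ξ (u s) ha hadm.pos.le
          hadm.le_quarter hadm.le_coeff)).2
        have hrate : 0 ≤ ε ^ 3 / 3 * decayRate ξ :=
          mul_nonneg (div_nonneg (pow_nonneg hadm.pos.le 3) three_pos.le) (decayRate_nonneg ξ)
        linear_combination mul_le_mul_of_nonneg_left hupper hrate

lemma energy_le (h : IsSolution a q b ξ u) (ha : 0 ≤ a) (hadm : IsAdmissible q b ε)
    (ht : 0 ≤ t) :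
    energy a q (u t)
      ≤ 3 * Real.exp (-(ε ^ 3 / 3 * decayRate ξ * t)) * energy a q (u 0) := by
  have hclose (s : ℝ) := abs_le.1
    (abs_lyapunov_sub_energy_le ξ (u s) ha hadm.pos.le hadm.le_quarter hadm.le_coeff)
  have hdecay := h.lyapunov_le ha hadm ht
  have hupper := mul_le_mul_of_nonneg_left (hclose 0).2
    (Real.exp_nonneg (-(ε ^ 3 / 3 * decayRate ξ * t)))
  rw [neg_mul] at hdecay
  linear_combination 2 * hdecay + 2 * (hclose t).1 + 2 * hupper

end IsSolution

/-- Here `energy 1 1` is the squared Euclidean norm of the state. -/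
theorem exists_energy_one_one_decay {a q : ℝ} (ha : 0 < a) (hq : 0 < q) (b : Fin 3 → ℝ) :
    ∃ C > (0 : ℝ), ∃ c > (0 : ℝ), ∀ (ξ : Fin 3 → ℝ) (u : ℝ → State), IsSolution a q b ξ u →
      ∀ t, 0 ≤ t →
        energy 1 1 (u t) ≤ C * Real.exp (-(c * decayRate ξ * t)) * energy 1 1 (u 0) := by
  obtain ⟨ε, hε⟩ := exists_isAdmissible b hq
  have ha' : 0 < a⁻¹ := inv_pos.2 ha
  have hq' : 0 < q⁻¹ := inv_pos.2 hq
  have hlower (u : State) : energy 1 1 u ≤ (1 + a⁻¹ + q⁻¹) * energy a q u :=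
    energy_le_mul_energy u
      (by linear_combination ha + mul_pos hq' ha - inv_mul_cancel₀ ha.ne')
      (by linear_combination hq + mul_pos ha' hq - inv_mul_cancel₀ hq.ne') (by linarith)
  have hupper (u : State) : energy a q u ≤ (1 + a + q) * energy 1 1 u :=
    energy_le_mul_energy u (by linarith) (by linarith) (by linarith)
  have hεpos := hε.pos
  refine ⟨(1 + a⁻¹ + q⁻¹) * 3 * (1 + a + q), by positivity, ε ^ 3 / 3, by positivity,
    fun ξ u h t ht => ?_⟩
  calc energy 1 1 (u t) ≤ (1 + a⁻¹ + q⁻¹) * energy a q (u t) := hlower _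
    _ ≤ (1 + a⁻¹ + q⁻¹) * (3 * Real.exp (-(ε ^ 3 / 3 * decayRate ξ * t)) * energy a q (u 0)) := by
        gcongr; exact h.energy_le ha.le hε ht
    _ ≤ (1 + a⁻¹ + q⁻¹) * (3 * Real.exp (-(ε ^ 3 / 3 * decayRate ξ * t)) *
          ((1 + a + q) * energy 1 1 (u 0))) := by gcongr; exact hupper _
    _ = (1 + a⁻¹ + q⁻¹) * 3 * (1 + a + q) * Real.exp (-(ε ^ 3 / 3 * decayRate ξ * t)) *
          energy 1 1 (u 0) := by ring

end Solutions

section PolarCoordinates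

lemma sq_nrmEM (ρ : ℂ) (v E B : Fin 3 → ℂ) :
    nrmEM ρ v E B ^ 2
      = energy 1 1 ⟨ρ, WithLp.toLp 2 v, WithLp.toLp 2 E, WithLp.toLp 2 B⟩ := by
  have hsum (z : Fin 3 → ℂ) : 0 ≤ ∑ j, Complex.normSq (z j) :=
    Finset.sum_nonneg fun j _ => Complex.normSq_nonneg (z j)
  rw [nrmEM, Real.sq_sqrt (by linarith [Complex.normSq_nonneg ρ, hsum v, hsum E, hsum B])]
  simp only [energy, EuclideanSpace.norm_sq_eq, Complex.normSq_eq_norm_sq, one_mul]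

variable (r : ℝ) (ω : Fin 3 → ℝ)

lemma dotC_smul (z : Fin 3 → ℂ) : dotC (r • ω) z = r * dotC ω z := by
  simp only [dotC, Pi.smul_apply, smul_eq_mul, Complex.ofReal_mul, mul_assoc, Finset.mul_sum]

lemma crossC_smul (z : Fin 3 → ℂ) : crossC (r • ω) z = (r : ℂ) • crossC ω z := by
  ext i
  fin_cases i <;> simp [crossC] <;> ring

variable {ω}

lemma decayRate_smul (hω : ∑ j, ω j ^ 2 = 1) :
    decayRate (r • ω) = r ^ 2 / (1 + r ^ 2) ^ 2 := by
  simp only [decayRate, Pi.smul_apply, smul_eq_mul, mul_pow, ← Finset.mul_sum, hω, mul_one]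

variable {r}

lemma isSolution_smul {ρinf ainf : ℝ} {Binf : Fin 3 → ℝ} (hρ : ρinf ≠ 0) (ha : ainf ≠ 0)
    {ρ ρ' : ℝ → ℂ} {v v' E E' B B' : ℝ → Fin 3 → ℂ}
    (dρ : ∀ t : ℝ, 0 ≤ t → HasDerivWithinAt ρ (ρ' t) (Set.Ici 0) t)
    (dv : ∀ t : ℝ, 0 ≤ t → HasDerivWithinAt v (v' t) (Set.Ici 0) t)
    (dE : ∀ t : ℝ, 0 ≤ t → HasDerivWithinAt E (E' t) (Set.Ici 0) t)
    (dB : ∀ t : ℝ, 0 ≤ t → HasDerivWithinAt B (B' t) (Set.Ici 0) t)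
    (hmass : ∀ t : ℝ, 0 ≤ t →
      (ainf : ℂ) * ρ' t + ((r : ℂ) * Complex.I) * ((ainf * ρinf : ℝ) : ℂ) * dotC ω (v t) = 0)
    (hmomentum : ∀ t : ℝ, 0 ≤ t →
      (ρinf : ℂ) • v' t
        + (((r : ℂ) * Complex.I) * ((ainf * ρinf : ℝ) : ℂ) * ρ t) • (fun j => (ω j : ℂ))
        + (ρinf : ℂ) • (v t - crossC Binf (v t)) + (ρinf : ℂ) • E t = 0)
    (hampere : ∀ t : ℝ, 0 ≤ t →
      E' t - ((r : ℂ) * Complex.I) • crossC ω (B t) - (ρinf : ℂ) • v t = 0)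
    (hfaraday : ∀ t : ℝ, 0 ≤ t → B' t + ((r : ℂ) * Complex.I) • crossC ω (E t) = 0)
    (hgauss : ((r : ℂ) * Complex.I) * dotC ω (E 0) + ρ 0 = 0)
    (hgauss_magnetic : ((r : ℂ) * Complex.I) * dotC ω (B 0) = 0) :
    IsSolution ainf ρinf Binf (r • ω)
      fun t => ⟨ρ t, WithLp.toLp 2 (v t), WithLp.toLp 2 (E t), WithLp.toLp 2 (B t)⟩ where
  hasDerivWithinAt_ρ t ht := (dρ t ht).congr_deriv <| by
    refine mul_left_cancel₀ (Complex.ofReal_ne_zero.2 ha) ?_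
    have h := hmass t ht
    simp only [divSymbol_apply, dotC_smul, Complex.real_smul, Complex.ofReal_mul] at h ⊢
    linear_combination h
  hasDerivWithinAt_v t ht := (hasDerivWithinAt_toLp (dv t ht)).congr_deriv <| by
    ext j
    refine mul_left_cancel₀ (Complex.ofReal_ne_zero.2 hρ) ?_
    have h := congrFun (hmomentum t ht) j
    simp only [Pi.add_apply, Pi.sub_apply, Pi.smul_apply, Pi.zero_apply, smul_eq_mul,
      Complex.real_smul, Complex.ofReal_mul, gradSymbol, crossCLM_apply, PiLp.sub_apply,
      PiLp.add_apply, PiLp.neg_apply, PiLp.smul_apply] at h ⊢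
    linear_combination h
  hasDerivWithinAt_E t ht := (hasDerivWithinAt_toLp (dE t ht)).congr_deriv <| by
    ext j
    have h := congrFun (hampere t ht) j
    simp only [Pi.sub_apply, Pi.smul_apply, Pi.zero_apply, smul_eq_mul, Complex.real_smul,
      curlSymbol_apply, crossC_smul, PiLp.add_apply, PiLp.smul_apply] at h ⊢
    linear_combination h
  hasDerivWithinAt_B t ht := (hasDerivWithinAt_toLp (dB t ht)).congr_deriv <| by
    ext j
    have h := congrFun (hfaraday t ht) j
    simp only [Pi.add_apply, Pi.smul_apply, Pi.zero_apply, smul_eq_mul, curlSymbol_apply,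
      crossC_smul, PiLp.neg_apply, PiLp.smul_apply] at h ⊢
    linear_combination h
  divSymbol_E_zero := by
    simp only [divSymbol_apply, dotC_smul]
    linear_combination hgauss
  divSymbol_B_zero := by
    simp only [divSymbol_apply, dotC_smul]
    linear_combination hgauss_magnetic

end PolarCoordinates

end EulerMaxwell

/-- **Theorem 7.1 (decay property for the linearized Euler–Maxwell system).**
For the linearized Euler–Maxwell system at frequency `ξ = rω`,
`A⁰û_t + irA(ω)û + Lû = 0` (written componentwise in `û = (ρ̂, v̂, Ê, B̂)`), with the
constraints `ir(ω·Ê(0)) + ρ̂(0) = 0` and `ir(ω·B̂(0)) = 0`, the solution satisfies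
`|û(t)| ≤ C e^{−c η(r) t}|û(0)|` with `η(r) = r²/(1+r²)²`. -/
theorem euler_maxwell_pointwise_decay
    (ρinf ainf binf : ℝ) (hρ : 0 < ρinf) (ha : 0 < ainf) (hb : binf = ainf * ρinf)
    (Binf : Fin 3 → ℝ) :
    ∃ C > (0:ℝ), ∃ c > (0:ℝ), ∀ r : ℝ, 0 ≤ r → ∀ ω : Fin 3 → ℝ, (∑ j, ω j ^ 2 = 1) →
      ∀ ρh ρh' : ℝ → ℂ, ∀ vh vh' Eh Eh' Bh Bh' : ℝ → (Fin 3 → ℂ),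
      (∀ t : ℝ, 0 ≤ t → HasDerivWithinAt ρh (ρh' t) (Set.Ici 0) t) →
      (∀ t : ℝ, 0 ≤ t → HasDerivWithinAt vh (vh' t) (Set.Ici 0) t) →
      (∀ t : ℝ, 0 ≤ t → HasDerivWithinAt Eh (Eh' t) (Set.Ici 0) t) →
      (∀ t : ℝ, 0 ≤ t → HasDerivWithinAt Bh (Bh' t) (Set.Ici 0) t) →
      -- `a∞ ρ̂′ + i r b∞ (ω·v̂) = 0`
      (∀ t : ℝ, 0 ≤ t →
        (ainf : ℂ) * ρh' t + ((r : ℂ) * Complex.I) * (binf : ℂ) * dotC ω (vh t) = 0) →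
      -- `ρ∞ v̂′ + i r b∞ ρ̂ ω + ρ∞ (v̂ − B∞ × v̂) + ρ∞ Ê = 0`
      (∀ t : ℝ, 0 ≤ t →
        (ρinf : ℂ) • vh' t
          + (((r : ℂ) * Complex.I) * (binf : ℂ) * ρh t) • (fun j => (ω j : ℂ))
          + (ρinf : ℂ) • (vh t - crossC Binf (vh t))
          + (ρinf : ℂ) • Eh t = 0) →
      -- `Ê′ − i r (ω × B̂) − ρ∞ v̂ = 0`
      (∀ t : ℝ, 0 ≤ t →
        Eh' t - ((r : ℂ) * Complex.I) • crossC ω (Bh t) - (ρinf : ℂ) • vh t = 0) →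
      -- `B̂′ + i r (ω × Ê) = 0`
      (∀ t : ℝ, 0 ≤ t →
        Bh' t + ((r : ℂ) * Complex.I) • crossC ω (Eh t) = 0) →
      -- initial constraints `ir(ω·Ê(0)) + ρ̂(0) = 0` and `ir(ω·B̂(0)) = 0`
      (((r : ℂ) * Complex.I) * dotC ω (Eh 0) + ρh 0 = 0) →
      (((r : ℂ) * Complex.I) * dotC ω (Bh 0) = 0) →
      ∀ t : ℝ, 0 ≤ t →
        nrmEM (ρh t) (vh t) (Eh t) (Bh t)
          ≤ C * Real.exp (-(c * (r ^ 2 / (1 + r ^ 2) ^ 2) * t))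
              * nrmEM (ρh 0) (vh 0) (Eh 0) (Bh 0) := by
  subst hb
  obtain ⟨C, hC, c, hc, hdecay⟩ := EulerMaxwell.exists_energy_one_one_decay ha hρ Binf
  refine ⟨√C, Real.sqrt_pos.2 hC, c / 2, half_pos hc, ?_⟩
  intro r _ ω hω ρh ρh' vh vh' Eh Eh' Bh Bh' dρ dv dE dB hmass hmomentum hampere hfaraday
    hgauss hgauss_magnetic t ht
  have hsol := EulerMaxwell.isSolution_smul hρ.ne' ha.ne' dρ dv dE dB hmass hmomentum hampere
    hfaraday hgauss hgauss_magnetic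
  have hsq := hdecay _ _ hsol t ht
  rw [← EulerMaxwell.sq_nrmEM, ← EulerMaxwell.sq_nrmEM, EulerMaxwell.decayRate_smul r hω] at hsq
  have hnonneg : 0 ≤ nrmEM (ρh 0) (vh 0) (Eh 0) (Bh 0) := Real.sqrt_nonneg _
  refine le_of_sq_le_sq (hsq.trans_eq ?_) (by positivity)
  rw [mul_pow, mul_pow, Real.sq_sqrt hC.le, ← Real.exp_nat_mul]
  ring_nf
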